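/- Let L ≥ 1 and let f_{i,j} : ℝ → ℂ (for 0 ≤ i, j ≤ L−1) be continuous 1-periodic functions, each with an absolutely convergent Fourier series. Define μ_0, …, μ_{L²−1} : ℝ → ℂ by μ_{i+jL} = f_{i,j} for 0 ≤ i, j ≤ L−1. Then ∫_{[0,1]^{2L²}} ∏_{i=0}^{L−1} ∏_{j=0}^{L−1} f_{i,j}(x^a_{i,j} − x^a_{i,(j+1) mod L} − x^b_{i,j} + x^b_{(i+1) mod L,j}) dx^a dx^b = ∫_{[0,1]^{L²}} ∏_{k=0}^{L²−1} μ_k(x_{(k+1) mod L²} − x_k) dx_0⋯dx_{L²−1}. -/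

import Mathlib

open MeasureTheory

/-- The `ℓ`-th Fourier coefficient of a 1-periodic function `f : ℝ → ℂ`,
`f̂(ℓ) = ∫₀¹ f(x) e^{−2πiℓx} dx`. -/
noncomputable def fourierCoeffR (f : ℝ → ℂ) (ℓ : ℤ) : ℂ :=
  ∫ x in (0:ℝ)..1, f x * Complex.exp (-(2 * Real.pi * Complex.I * ℓ * x))

/-!
Expand both integrands into Fourier series. The term with frequencies `n` integrates to zero unless
the character `x ↦ e^{2πi ∑ₖ nₖ φₖ(x)}` is trivial, where `φₖ` is the `k`-th phase. Summation by
parts turns triviality into invariance of `n` under the cyclic shifts of the index set; since these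
act transitively, `n` is a constant `ℓ`. Both integrals are therefore equal to `∑_ℓ ∏ₖ f̂ₖ(ℓ)`,
which does not depend on how the functions are enumerated.
-/

open scoped FourierTransform

/-- The functions with an absolutely convergent Fourier series representing them at every point,
the class for which integrals of products can be expanded frequency by frequency. The expansion
is spelled with `Complex.exp`; `eq_tsum_fourierChar` restates it in terms of `𝐞`. -/
structure HasAbsFourierSeries (g : ℝ → ℂ) : Prop where
  summable_norm : Summable fun ℓ : ℤ => ‖fourierCoeffR g ℓ‖
  eq_tsum : ∀ x : ℝ, g x = ∑' ℓ : ℤ, fourierCoeffR g ℓ *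
    Complex.exp (2 * Real.pi * Complex.I * ℓ * x)

section ProductOfSeries

variable {κ ι R : Type*} [Fintype κ] [NormedCommRing R] [NormOneClass R]

theorem summable_norm_prod_pi {F : κ → ι → R} (hF : ∀ k, Summable fun l => ‖F k l‖) :
    Summable fun n : κ → ι => ‖∏ k, F k (n k)‖ := by
  classical
  refine summable_of_sum_le (c := ∏ k, ∑' l, ‖F k l‖) (fun n => norm_nonneg _) fun s => ?_
  have hs : s ⊆ Fintype.piFinset fun k => s.image fun n => n k := fun n hn =>
    Fintype.mem_piFinset.mpr fun k => Finset.mem_image_of_mem _ hn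
  calc ∑ n ∈ s, ‖∏ k, F k (n k)‖
      ≤ ∑ n ∈ s, ∏ k, ‖F k (n k)‖ := Finset.sum_le_sum fun n _ => Finset.norm_prod_le _ _
    _ ≤ ∑ n ∈ Fintype.piFinset fun k => s.image fun n => n k, ∏ k, ‖F k (n k)‖ :=
      Finset.sum_le_sum_of_subset_of_nonneg hs fun n _ _ =>
        Finset.prod_nonneg fun k _ => norm_nonneg _
    _ = ∏ k, ∑ l ∈ s.image fun n => n k, ‖F k l‖ :=
      (Finset.prod_univ_sum _ fun k l => ‖F k l‖).symm
    _ ≤ ∏ k, ∑' l, ‖F k l‖ :=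
      Finset.prod_le_prod (fun k _ => Finset.sum_nonneg fun l _ => norm_nonneg _)
        fun k _ => (hF k).sum_le_tsum _ fun l _ => norm_nonneg _

theorem prod_tsum_eq_tsum_prod_pi [CompleteSpace R] {F : κ → ι → R}
    (hF : ∀ k, Summable fun l => ‖F k l‖) :
    ∏ k, ∑' l, F k l = ∑' n : κ → ι, ∏ k, F k (n k) := by
  revert F
  refine Fintype.induction_empty_option (P := fun κ [Fintype κ] => ∀ {F : κ → ι → R},
    (∀ k, Summable fun l => ‖F k l‖) → ∏ k, ∑' l, F k l = ∑' n : κ → ι, ∏ k, F k (n k))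
    ?equiv ?empty ?option κ
  case equiv =>
    intro α β _ e ih F hF
    let := Fintype.ofEquiv β e.symm
    rw [← e.prod_comp, ih fun k => hF (e k), ← (e.arrowCongr (Equiv.refl ι)).tsum_eq]
    exact tsum_congr fun n => by simp [← e.prod_comp]
  case empty => simp
  case option =>
    intro α _ ih F hF
    rw [Fintype.prod_option, ih fun k => hF (some k),
      tsum_mul_tsum_of_summable_norm (hF none) (summable_norm_prod_pi fun k => hF (some k)),
      ← (Equiv.piOptionEquivProd (β := fun _ => ι)).symm.tsum_eq]
    exact tsum_congr fun p => by simp [Fintype.prod_option, Equiv.piOptionEquivProd]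

end ProductOfSeries

theorem fourierChar_sum {κ : Type*} (s : Finset κ) (φ : κ → ℝ) :
    (𝐞 (∑ k ∈ s, φ k) : ℂ) = ∏ k ∈ s, (𝐞 (φ k) : ℂ) := by
  simp [Real.fourierChar_apply, Finset.mul_sum, Finset.sum_mul, Complex.exp_sum]

section Expansion

variable {X κ : Type*} [MeasurableSpace X] [Fintype κ] {μ : Measure X} [IsFiniteMeasure μ]
  {g : κ → ℝ → ℂ} {φ : κ → X → ℝ}

theorem HasAbsFourierSeries.eq_tsum_fourierChar {g : ℝ → ℂ} (hg : HasAbsFourierSeries g) (x : ℝ) :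
    g x = ∑' ℓ : ℤ, fourierCoeffR g ℓ * 𝐞 (ℓ * x) := by
  rw [hg.eq_tsum x]
  refine tsum_congr fun ℓ => ?_
  rw [Real.fourierChar_apply]
  push_cast
  ring_nf

theorem integral_prod_comp_eq_tsum (hg : ∀ k, HasAbsFourierSeries (g k))
    (hφ : ∀ k, AEMeasurable (φ k) μ) :
    ∫ x, ∏ k, g k (φ k x) ∂μ = ∑' n : κ → ℤ,
      (∏ k, fourierCoeffR (g k) (n k)) * ∫ x, (𝐞 (∑ k, n k * φ k x) : ℂ) ∂μ := by
  let F (n : κ → ℤ) (x : X) : ℂ :=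
    (∏ k, fourierCoeffR (g k) (n k)) * 𝐞 (∑ k, n k * φ k x)
  have hsum : Summable fun n : κ → ℤ => ‖∏ k, fourierCoeffR (g k) (n k)‖ :=
    summable_norm_prod_pi fun k => (hg k).summable_norm
  have norm_F (n x) : ‖F n x‖ = ‖∏ k, fourierCoeffR (g k) (n k)‖ := by
    rw [norm_mul, Circle.norm_coe, mul_one]
  have integrable_F (n) : Integrable (F n) μ := by
    refine .of_bound (AEMeasurable.aestronglyMeasurable ?_) _ (.of_forall fun x => (norm_F n x).le)
    fun_prop
  have expansion (x) : ∏ k, g k (φ k x) = ∑' n, F n x := by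
    simp only [(hg _).eq_tsum_fourierChar, F, fourierChar_sum, ← Finset.prod_mul_distrib]
    exact prod_tsum_eq_tsum_prod_pi fun k => by
      simpa only [norm_mul, Circle.norm_coe, mul_one] using (hg k).summable_norm
  simp only [expansion]
  rw [← integral_tsum_of_summable_integral_norm integrable_F]
  · simp only [F, integral_const_mul]
  · simpa only [norm_F, integral_const] using hsum.const_smul (μ.real Set.univ)

theorem integral_prod_comp_eq_tsum_of_orthogonal [Nonempty κ]
    (hg : ∀ k, HasAbsFourierSeries (g k)) (hφ : ∀ k, AEMeasurable (φ k) μ)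
    (horth : ∀ n : κ → ℤ, ∫ x, (𝐞 (∑ k, n k * φ k x) : ℂ) ∂μ =
      (Set.range (Function.const κ)).indicator (fun _ => 1) n) :
    ∫ x, ∏ k, g k (φ k x) ∂μ = ∑' ℓ : ℤ, ∏ k, fourierCoeffR (g k) ℓ := by
  have hinj : Function.Injective (Function.const κ : ℤ → κ → ℤ) := Function.const_injective
  simp only [integral_prod_comp_eq_tsum hg hφ, horth]
  rw [← hinj.tsum_eq]
  · simp
  · exact (Function.support_mul_subset_right _ _).trans Set.support_indicator_subset

end Expansion

section Characters

theorem setIntegral_Icc_fourierChar (m : ℤ) :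
    ∫ y in Set.Icc (0 : ℝ) 1, (𝐞 (m * y) : ℂ) = if m = 0 then 1 else 0 := by
  rw [integral_Icc_eq_integral_Ioc, ← intervalIntegral.integral_of_le zero_le_one]
  split_ifs with hm
  · simp [hm]
  · have hchar (y : ℝ) : (𝐞 (m * y) : ℂ) = Complex.exp (m * (2 * Real.pi * Complex.I) * y) := by
      rw [Real.fourierChar_apply]
      push_cast
      ring_nf
    simp only [hchar]
    rw [integral_exp_mul_complex (by simp [hm, Real.pi_ne_zero])]
    simp [Complex.exp_int_mul_two_pi_mul_I]

theorem setIntegral_Icc_pi_fourierChar_sum {ι : Type*} [Fintype ι] {E : ι → Type*}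
    [∀ i, Preorder (E i)] [∀ i, MeasureSpace (E i)] [∀ i, SigmaFinite (volume : Measure (E i))]
    (a b : ∀ i, E i) (ψ : ∀ i, E i → ℝ) :
    ∫ x in Set.Icc a b, (𝐞 (∑ i, ψ i (x i)) : ℂ) =
      ∏ i, ∫ y in Set.Icc (a i) (b i), (𝐞 (ψ i y) : ℂ) := by
  simp only [fourierChar_sum]
  rw [← Set.pi_univ_Icc, volume_pi, Measure.restrict_pi_pi,
    integral_fintype_prod_eq_prod fun i y => (𝐞 (ψ i y) : ℂ)]

theorem setIntegral_Icc_prod_fourierChar_add {E₁ E₂ : Type*} [Preorder E₁] [Preorder E₂]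
    [MeasureSpace E₁] [MeasureSpace E₂] [SigmaFinite (volume : Measure E₁)]
    [SigmaFinite (volume : Measure E₂)] (a b : E₁ × E₂) (ψ₁ : E₁ → ℝ) (ψ₂ : E₂ → ℝ) :
    ∫ x in Set.Icc a b, (𝐞 (ψ₁ x.1 + ψ₂ x.2) : ℂ) =
      (∫ y in Set.Icc a.1 b.1, (𝐞 (ψ₁ y) : ℂ)) * ∫ y in Set.Icc a.2 b.2, (𝐞 (ψ₂ y) : ℂ) := by
  simp only [AddChar.map_add_eq_mul, Circle.coe_mul]
  rw [← setIntegral_prod_mul, Set.Icc_prod_Icc, Measure.volume_eq_prod]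

theorem setIntegral_Icc_pi_fourierChar {ι : Type*} [Fintype ι] (m : ι → ℤ) :
    ∫ x in Set.Icc (0 : ι → ℝ) 1, (𝐞 (∑ i, m i * x i) : ℂ) = if m = 0 then 1 else 0 := by
  rw [setIntegral_Icc_pi_fourierChar_sum 0 1 fun i y => m i * y]
  simp [setIntegral_Icc_fourierChar, Finset.prod_ite_zero, funext_iff]

theorem setIntegral_Icc_pi_pi_fourierChar {ι κ : Type*} [Fintype ι] [Fintype κ]
    (m : ι → κ → ℤ) :
    ∫ x in Set.Icc (0 : ι → κ → ℝ) 1, (𝐞 (∑ i, ∑ j, m i j * x i j) : ℂ) =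
      if m = 0 then 1 else 0 := by
  rw [setIntegral_Icc_pi_fourierChar_sum 0 1 fun i (y : κ → ℝ) => ∑ j, m i j * y j]
  simp [setIntegral_Icc_pi_fourierChar, Finset.prod_ite_zero, funext_iff]

end Characters

section Shift

variable {G : Type*} [AddGroup G]

theorem sum_mul_shift_sub [Fintype G] {R : Type*} [NonUnitalNonAssocRing R] (a : G) (n x : G → R) :
    ∑ k, n k * (x (k + a) - x k) = ∑ k, (n (k - a) - n k) * x k := by
  have hshift : ∑ k, n k * x (k + a) = ∑ k, n (k - a) * x k := by
    simpa using Equiv.sum_comp (Equiv.addRight a) fun k => n (k - a) * x k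
  simp only [mul_sub, sub_mul, Finset.sum_sub_distrib, hshift]

theorem eq_apply_zero_of_sub_eq {α : Type*} {a : G} (ha : ∀ k, k ∈ AddSubgroup.zmultiples a)
    {n : G → α} (hn : ∀ k, n (k - a) = n k) (k : G) : n k = n 0 := by
  have hper : Function.Periodic n a := fun k => by rw [← hn (k + a), add_sub_cancel_right]
  obtain ⟨z, rfl⟩ := ha k
  exact hper.zsmul_eq z

end Shift

section Cycle

variable {G : Type*} [AddGroup G] [Fintype G] {a : G}

theorem setIntegral_fourierChar_cycle (ha : ∀ k, k ∈ AddSubgroup.zmultiples a) (n : G → ℤ) :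
    ∫ x in Set.Icc (0 : G → ℝ) 1, (𝐞 (∑ k, n k * (x (k + a) - x k)) : ℂ) =
      (Set.range (Function.const G)).indicator (fun _ => 1) n := by
  classical
  simp only [sum_mul_shift_sub a fun k => (n k : ℝ), ← Int.cast_sub]
  rw [setIntegral_Icc_pi_fourierChar fun k => n (k - a) - n k, Set.indicator_apply]
  refine if_congr ⟨fun h => ⟨n 0, ?_⟩, ?_⟩ rfl rfl
  · exact funext fun k =>
      (eq_apply_zero_of_sub_eq ha (fun k => sub_eq_zero.mp (congrFun h k)) k).symm
  · rintro ⟨ℓ, rfl⟩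
    exact funext fun _ => sub_self ℓ

theorem setIntegral_prod_cycle_eq_tsum (ha : ∀ k, k ∈ AddSubgroup.zmultiples a)
    {g : G → ℝ → ℂ} (hg : ∀ k, HasAbsFourierSeries (g k)) :
    ∫ x in Set.Icc (0 : G → ℝ) 1, ∏ k, g k (x (k + a) - x k) =
      ∑' ℓ : ℤ, ∏ k, fourierCoeffR (g k) ℓ := by
  have : IsFiniteMeasure (volume.restrict (Set.Icc (0 : G → ℝ) 1)) :=
    isFiniteMeasure_restrict.mpr isCompact_Icc.measure_lt_top.ne
  exact integral_prod_comp_eq_tsum_of_orthogonal hg (fun _ => by fun_prop)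
    (setIntegral_fourierChar_cycle ha)

end Cycle

section Plaquette

variable {G H : Type*} [AddGroup G] [AddGroup H] {a : G} {b : H}

/-- The circulation of the link variables `x = (xᵃ, xᵇ)` around the plaquette at `p`, the phase at
which the lattice gauge integrand is evaluated. The unit steps of the lattice are replaced by
arbitrary steps `a` and `b`. -/
def circulation (a : G) (b : H) (p : G × H) (x : (G → H → ℝ) × (G → H → ℝ)) : ℝ :=
  x.1 p.1 p.2 - x.1 p.1 (p.2 + b) - x.2 p.1 p.2 + x.2 (p.1 + a) p.2

variable [Fintype G] [Fintype H]

theorem sum_mul_circulation (n : G × H → ℝ) (x : (G → H → ℝ) × (G → H → ℝ)) :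
    ∑ p, n p * circulation a b p x =
      ∑ i, ∑ j, (n (i, j) - n (i, j - b)) * x.1 i j +
        ∑ i, ∑ j, (n (i - a, j) - n (i, j)) * x.2 i j := by
  have hrow (i) := sum_mul_shift_sub b (fun j => n (i, j)) (x.1 i)
  have hcol (j) := sum_mul_shift_sub a (fun i => n (i, j)) fun i => x.2 i j
  calc
    _ = ∑ i, -∑ j, n (i, j) * (x.1 i (j + b) - x.1 i j) +
        ∑ i, ∑ j, n (i, j) * (x.2 (i + a) j - x.2 i j) := by
      simp only [Fintype.sum_prod_type, ← Finset.sum_neg_distrib, ← Finset.sum_add_distrib,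
        circulation]
      exact Finset.sum_congr rfl fun i _ => Finset.sum_congr rfl fun j _ => by ring
    _ = ∑ i, -∑ j, (n (i, j - b) - n (i, j)) * x.1 i j +
        ∑ j, ∑ i, (n (i - a, j) - n (i, j)) * x.2 i j := by
      rw [Finset.sum_comm (f := fun i j => n (i, j) * (x.2 (i + a) j - x.2 i j))]
      simp only [hrow, hcol]
    _ = _ := by
      rw [Finset.sum_comm (f := fun j i => (n (i - a, j) - n (i, j)) * x.2 i j)]
      simp only [← Finset.sum_neg_distrib, ← neg_mul, neg_sub]

theorem setIntegral_fourierChar_circulation (ha : ∀ i, i ∈ AddSubgroup.zmultiples a)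
    (hb : ∀ j, j ∈ AddSubgroup.zmultiples b) (n : G × H → ℤ) :
    ∫ x in Set.Icc (0 : (G → H → ℝ) × (G → H → ℝ)) 1,
        (𝐞 (∑ p, n p * circulation a b p x) : ℂ) =
      (Set.range (Function.const (G × H))).indicator (fun _ => 1) n := by
  classical
  simp only [sum_mul_circulation fun p => (n p : ℝ), ← Int.cast_sub]
  rw [setIntegral_Icc_prod_fourierChar_add 0 1
    (fun y : G → H → ℝ => ∑ i, ∑ j, ((n (i, j) - n (i, j - b) : ℤ) : ℝ) * y i j)
    (fun y : G → H → ℝ => ∑ i, ∑ j, ((n (i - a, j) - n (i, j) : ℤ) : ℝ) * y i j)]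
  simp only [Prod.fst_zero, Prod.snd_zero, Prod.fst_one, Prod.snd_one]
  rw [setIntegral_Icc_pi_pi_fourierChar fun i j => n (i, j) - n (i, j - b),
    setIntegral_Icc_pi_pi_fourierChar fun i j => n (i - a, j) - n (i, j),
    ite_zero_mul_ite_zero, one_mul, Set.indicator_apply]
  refine if_congr ⟨fun ⟨hrow, hcol⟩ => ⟨n 0, funext fun p => Eq.symm ?_⟩, ?_⟩ rfl rfl
  · calc n (p.1, p.2) = n (p.1, 0) := eq_apply_zero_of_sub_eq (n := fun j => n (p.1, j)) hb
          (fun j => (sub_eq_zero.mp (congrFun₂ hrow p.1 j)).symm) p.2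
      _ = n (0, 0) := eq_apply_zero_of_sub_eq (n := fun i => n (i, 0)) ha
          (fun i => sub_eq_zero.mp (congrFun₂ hcol i 0)) p.1
  · rintro ⟨ℓ, rfl⟩
    exact ⟨funext₂ fun _ _ => sub_self ℓ, funext₂ fun _ _ => sub_self ℓ⟩

theorem setIntegral_prod_circulation_eq_tsum (ha : ∀ i, i ∈ AddSubgroup.zmultiples a)
    (hb : ∀ j, j ∈ AddSubgroup.zmultiples b) {g : G × H → ℝ → ℂ}
    (hg : ∀ p, HasAbsFourierSeries (g p)) :
    ∫ x in Set.Icc (0 : (G → H → ℝ) × (G → H → ℝ)) 1, ∏ p, g p (circulation a b p x) =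
      ∑' ℓ : ℤ, ∏ p, fourierCoeffR (g p) ℓ := by
  have : IsFiniteMeasureOnCompacts (volume : Measure (G → H → ℝ)) := inferInstance
  have : IsFiniteMeasure (volume.restrict (Set.Icc (0 : (G → H → ℝ) × (G → H → ℝ)) 1)) :=
    isFiniteMeasure_restrict.mpr isCompact_Icc.measure_lt_top.ne
  exact integral_prod_comp_eq_tsum_of_orthogonal hg
    (fun p => by unfold circulation; fun_prop) (setIntegral_fourierChar_circulation ha hb)

end Plaquette

theorem stmt10_general {G H K : Type*} [AddGroup G] [AddGroup H] [AddGroup K] [Fintype G]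
    [Fintype H] [Fintype K] {a : G} {b : H} {c : K} (ha : ∀ i, i ∈ AddSubgroup.zmultiples a)
    (hb : ∀ j, j ∈ AddSubgroup.zmultiples b) (hc : ∀ k, k ∈ AddSubgroup.zmultiples c)
    (e : G × H ≃ K) {f : G → H → ℝ → ℂ} (hf : ∀ i j, HasAbsFourierSeries (f i j))
    {mu : K → ℝ → ℂ} (hmu : ∀ i j, mu (e (i, j)) = f i j) :
    (∫ x in Set.Icc (0 : (G → H → ℝ) × (G → H → ℝ)) 1,
      ∏ i, ∏ j, f i j (x.1 i j - x.1 i (j + b) - x.2 i j + x.2 (i + a) j)) =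
      ∫ x in Set.Icc (0 : K → ℝ) 1, ∏ k, mu k (x (k + c) - x k) := by
  have hmu_series : ∀ k, HasAbsFourierSeries (mu k) :=
    e.forall_congr_right.mp fun p => hmu p.1 p.2 ▸ hf p.1 p.2
  calc
    _ = ∫ x in Set.Icc (0 : (G → H → ℝ) × (G → H → ℝ)) 1,
        ∏ p, mu (e p) (circulation a b p x) := by
      simp only [Fintype.prod_prod_type, hmu, circulation]
    _ = ∑' ℓ : ℤ, ∏ p, fourierCoeffR (mu (e p)) ℓ :=
      setIntegral_prod_circulation_eq_tsum ha hb fun p => hmu_series (e p)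
    _ = ∑' ℓ : ℤ, ∏ k, fourierCoeffR (mu k) ℓ :=
      tsum_congr fun ℓ => e.prod_comp fun k => fourierCoeffR (mu k) ℓ
    _ = _ := (setIntegral_prod_cycle_eq_tsum hc hmu_series).symm

theorem mem_zmultiples_one_fin {N : ℕ} [NeZero N] (k : Fin N) :
    k ∈ AddSubgroup.zmultiples (1 : Fin N) := by
  open scoped Fin.NatCast Fin.CommRing in
  exact AddSubgroup.mem_zmultiples_iff.mpr ⟨k.val, by simp⟩

theorem stmt10 (L : ℕ) [NeZero L] (f : Fin L → Fin L → ℝ → ℂ)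
    (hcont : ∀ i j, Continuous (f i j))
    (hper : ∀ i j (x : ℝ), f i j (x + 1) = f i j x)
    (habs : ∀ i j, Summable fun ℓ : ℤ => ‖fourierCoeffR (f i j) ℓ‖)
    (hrep : ∀ i j (x : ℝ),
      f i j x = ∑' ℓ : ℤ, fourierCoeffR (f i j) ℓ *
        Complex.exp (2 * Real.pi * Complex.I * ℓ * x))
    (mu : Fin (L ^ 2) → ℝ → ℂ)
    (hmu : ∀ i j : Fin L,
      mu ⟨i.val + j.val * L, by
        have hi := i.isLt
        have h2 : (j.val + 1) * L ≤ L * L := Nat.mul_le_mul_right L j.isLt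
        rw [add_mul, one_mul] at h2
        have h3 : L ^ 2 = L * L := sq L
        omega⟩ = f i j) :
    (∫ x in Set.Icc (0 : (Fin L → Fin L → ℝ) × (Fin L → Fin L → ℝ)) 1,
      ∏ i, ∏ j, f i j (x.1 i j - x.1 i (j + 1) - x.2 i j + x.2 (i + 1) j)) =
      ∫ x in Set.Icc (0 : Fin (L ^ 2) → ℝ) 1, ∏ k, mu k (x (k + 1) - x k) := by
  exact stmt10_general mem_zmultiples_one_fin mem_zmultiples_one_fin mem_zmultiples_one_fin
    ((Equiv.prodComm _ _).trans (finProdFinEquiv.trans (finCongr (sq L).symm)))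
    (fun i j => ⟨habs i j, hrep i j⟩)
    fun i j => (congrArg mu (Fin.ext (by simp [mul_comm]))).trans (hmu i j)
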